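/- Every De Morgan clone C with DMA ⊊ C contains at least one of the functions mnh²₁, mnh²₂, mhnp³; moreover, the three clones ⟨DMA, mnh²₁⟩, ⟨DMA, mnh²₂⟩, ⟨DMA, mhnp³⟩ are pairwise incomparable by inclusion. Consequently, DMA has exactly three covers in the lattice of clones on DM4, namely ⟨DMA, mnh²₁⟩, ⟨DMA, mnh²₂⟩ and ⟨DMA, mhnp³⟩. -/

import Mathlib

set_option autoImplicit false

/-- The four truth values of the Belnap–Dunn logic. -/
inductive DM4 : Type
  | t
  | f
  | n
  | b
deriving DecidableEq

namespace DM4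

/-- De Morgan negation. -/
def neg : DM4 → DM4
  | t => f
  | f => t
  | n => n
  | b => b

/-- Conflation. -/
def conf : DM4 → DM4
  | t => t
  | f => f
  | n => b
  | b => n

/-- Meet in the truth order. -/
def meet : DM4 → DM4 → DM4
  | f, _ => f
  | _, f => f
  | t, y => y
  | x, t => x
  | n, n => n
  | b, b => b
  | n, b => f
  | b, n => f

/-- Join in the truth order. -/
def join : DM4 → DM4 → DM4
  | t, _ => t
  | _, t => t
  | f, y => y
  | x, f => x
  | n, n => n
  | b, b => b
  | n, b => t
  | b, n => t

/-- Meet in the information order (⊗). -/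
def imeet : DM4 → DM4 → DM4
  | n, _ => n
  | _, n => n
  | b, y => y
  | x, b => x
  | t, t => t
  | f, f => f
  | t, f => n
  | f, t => n

/-- Join in the information order (⊕). -/
def ijoin : DM4 → DM4 → DM4
  | b, _ => b
  | _, b => b
  | n, y => y
  | x, n => x
  | t, t => t
  | f, f => f
  | t, f => b
  | f, t => b

/-- The truth order: least element `f`, greatest element `t`, with `n`, `b` incomparable. -/
def tle (x y : DM4) : Prop := x = y ∨ x = f ∨ y = t

/-- The information order: least element `n`, greatest element `b`, with `t`, `f` incomparable. -/
def ile (x y : DM4) : Prop := x = y ∨ x = n ∨ y = b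

/-- □: maps t to t and everything else to f. -/
def box : DM4 → DM4
  | t => t
  | _ => f

/-- ◇: maps f to f and everything else to t. -/
def diamond : DM4 → DM4
  | f => f
  | _ => t

/-- Δ: maps t, b to t and n, f to f. -/
def delta : DM4 → DM4
  | t => t
  | b => t
  | _ => f

/-- ∇: maps t, n to t and b, f to f. -/
def nabla : DM4 → DM4
  | t => t
  | n => t
  | _ => f

/-- id_{b↦n}: maps b to n and fixes t, f, n. -/
def idbn : DM4 → DM4
  | b => n
  | x => x

/-- id_{n↦b}: maps n to b and fixes t, f, b. -/
def idnb : DM4 → DM4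
  | n => b
  | x => x

/-- id_{n↦t}: maps n to t and fixes t, f, b. -/
def idnt : DM4 → DM4
  | n => t
  | x => x

/-- id_{b↦t}: maps b to t and fixes t, f, n. -/
def idbt : DM4 → DM4
  | b => t
  | x => x

/-- t_{n↦n}: maps n to n and everything else to t. -/
def tnn : DM4 → DM4
  | n => n
  | _ => t

/-- t_{b↦b}: maps b to b and everything else to t. -/
def tbb : DM4 → DM4
  | b => b
  | _ => t

/-- The binary function pbp²₁. -/
def pbp1 : DM4 → DM4 → DM4
  | t, t => t | t, f => f | t, n => f | t, b => b
  | f, t => t | f, f => f | f, n => f | f, b => b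
  | n, t => t | n, f => f | n, n => n | n, b => b
  | b, t => b | b, f => f | b, n => f | b, b => b

/-- The binary function pbp²₂. -/
def pbp2 : DM4 → DM4 → DM4
  | t, t => t | t, f => f | t, n => n | t, b => f
  | f, t => t | f, f => f | f, n => n | f, b => f
  | n, t => n | n, f => f | n, n => n | n, b => f
  | b, t => t | b, f => f | b, n => n | b, b => b

/-- The binary function mnh²₁. -/
def mnh1 : DM4 → DM4 → DM4
  | t, t => f | t, f => f | t, n => n | t, b => b
  | f, t => f | f, f => f | f, n => n | f, b => b
  | n, t => f | n, f => f | n, n => n | n, b => f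
  | b, t => f | b, f => f | b, n => n | b, b => b

/-- The binary function mnh²₂. -/
def mnh2 : DM4 → DM4 → DM4
  | t, t => f | t, f => f | t, n => n | t, b => b
  | f, t => f | f, f => f | f, n => n | f, b => b
  | n, t => f | n, f => f | n, n => n | n, b => b
  | b, t => f | b, f => f | b, n => f | b, b => b

/-- The binary function mhnp². -/
def mhnp2 : DM4 → DM4 → DM4
  | t, _ => t
  | f, _ => t
  | n, b => f
  | n, _ => n
  | b, n => f
  | b, _ => b

/-- The binary function mnp²₁. -/
def mnp1 : DM4 → DM4 → DM4
  | t, b => b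
  | t, _ => t
  | f, b => b
  | f, _ => t
  | n, b => f
  | n, _ => n
  | b, n => f
  | b, _ => b

/-- The binary function mnp²₂. -/
def mnp2 : DM4 → DM4 → DM4
  | t, _ => t
  | f, _ => t
  | n, _ => n
  | b, n => f
  | b, _ => b

/-- The binary function mnp²₃. -/
def mnp3 : DM4 → DM4 → DM4
  | t, n => n
  | t, _ => t
  | f, n => n
  | f, _ => t
  | n, b => f
  | n, _ => n
  | b, n => f
  | b, _ => b

/-- The binary function mnp²₄. -/
def mnp4 : DM4 → DM4 → DM4
  | t, _ => t
  | f, _ => t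
  | n, b => f
  | n, _ => n
  | b, _ => b

/-- The ternary function mhnp³. -/
def mhnp3 : DM4 → DM4 → DM4 → DM4
  | _, t, _ => f
  | _, f, _ => f
  | t, n, _ => n
  | f, n, _ => f
  | b, n, _ => f
  | n, n, b => f
  | n, n, _ => n
  | t, b, _ => b
  | f, b, _ => f
  | n, b, _ => f
  | b, b, n => f
  | b, b, _ => b

/-- The set of designated values. -/
def Des : Set DM4 := {t, b}

/-- Designatedness as a Boolean predicate. -/
def des : DM4 → Bool
  | t => true
  | b => true
  | _ => false

/-- The protoimplication →_{t-max}. -/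
def tmax (x y : DM4) : DM4 :=
  match des x, des y with
  | true, false => n
  | _, _ => t

/-- The protoimplication →_{i-max}. -/
def imax (x y : DM4) : DM4 :=
  match des x, des y with
  | true, false => f
  | _, _ => b

/-- The protoimplication ↔_{t-min}. -/
def tmin (x y : DM4) : DM4 := if x = y then b else f

/-- The protoimplication ↔_{i-min}. -/
def imin (x y : DM4) : DM4 := if x = y then t else n

/-- A binary operation is a protoimplication if it satisfies Reflexivity and Modus Ponens
with respect to the designated set {t, b}. -/
def IsProtoimplication (r : DM4 → DM4 → DM4) : Prop :=
  (∀ a : DM4, r a a ∈ Des) ∧ ∀ a c : DM4, a ∈ Des → r a c ∈ Des → c ∈ Des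

/-- `DMFun k` is the type of De Morgan functions of arity `k + 1` (arities are positive). -/
abbrev DMFun (k : ℕ) : Type := (Fin (k + 1) → DM4) → DM4

/-- Membership in the clone generated by the family of operations `S`
(`S k` is the set of generators of arity `k + 1`). -/
inductive InClone (S : ∀ k : ℕ, Set (DMFun k)) : ∀ k : ℕ, DMFun k → Prop
  | base {k : ℕ} {g : DMFun k} : g ∈ S k → InClone S k g
  | proj {k : ℕ} (i : Fin (k + 1)) : InClone S k (fun x => x i)
  | comp {k m : ℕ} {g : DMFun m} {h : Fin (m + 1) → DMFun k} :
      InClone S m g → (∀ i, InClone S k (h i)) →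
      InClone S k (fun x => g (fun i => h i x))

/-- A family of sets of De Morgan functions is a clone if it contains all projections
and is closed under composition. -/
structure IsClone (C : ∀ k : ℕ, Set (DMFun k)) : Prop where
  proj : ∀ (k : ℕ) (i : Fin (k + 1)), (fun x => x i) ∈ C k
  comp : ∀ (k m : ℕ) (g : DMFun m) (h : Fin (m + 1) → DMFun k),
      g ∈ C m → (∀ i, h i ∈ C k) → (fun x => g (fun i => h i x)) ∈ C k

/-- The generating family consisting of a single unary operation. -/
def op1 (g : DM4 → DM4) : ∀ k : ℕ, Set (DMFun k)
  | 0 => {fun x => g (x 0)}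
  | _ + 1 => ∅

/-- The generating family consisting of a single binary operation. -/
def op2 (g : DM4 → DM4 → DM4) : ∀ k : ℕ, Set (DMFun k)
  | 1 => {fun x => g (x 0) (x 1)}
  | _ => ∅

/-- The generating family consisting of a single ternary operation. -/
def op3 (g : DM4 → DM4 → DM4 → DM4) : ∀ k : ℕ, Set (DMFun k)
  | 2 => {fun x => g (x 0) (x 1) (x 2)}
  | _ => ∅

/-- Union of two families of operations. -/
def funion (S T : ∀ k : ℕ, Set (DMFun k)) : ∀ k : ℕ, Set (DMFun k) := fun k => S k ∪ T k

infixr:65 " ⊹ " => funion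

/-- The generators of DLat: ∧, ∨, t, f (constants as unary constant functions). -/
def DLatGen : ∀ k : ℕ, Set (DMFun k) :=
  op2 meet ⊹ op2 join ⊹ op1 (fun _ => t) ⊹ op1 (fun _ => f)

/-- The generators of DMA: ∧, ∨, t, f, −. -/
def DMAGen : ∀ k : ℕ, Set (DMFun k) := DLatGen ⊹ op1 neg

/-- The generators of BiLat: ∧, ∨, t, f, ⊗, ⊕, n, b. -/
def BiLatGen : ∀ k : ℕ, Set (DMFun k) :=
  DLatGen ⊹ op2 imeet ⊹ op2 ijoin ⊹ op1 (fun _ => n) ⊹ op1 (fun _ => b)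

/-- A De Morgan function is harmonious if it commutes with conflation. -/
def Harmonious {k : ℕ} (g : DMFun k) : Prop :=
  ∀ x : Fin (k + 1) → DM4, g (fun i => conf (x i)) = conf (g x)

/-- A De Morgan function is positive if it is monotone in the componentwise truth order. -/
def Positive {k : ℕ} (g : DMFun k) : Prop :=
  ∀ x y : Fin (k + 1) → DM4, (∀ i, tle (x i) (y i)) → tle (g x) (g y)

/-- A De Morgan function is persistent if it is monotone in the componentwise
information order. -/
def Persistent {k : ℕ} (g : DMFun k) : Prop :=
  ∀ x y : Fin (k + 1) → DM4, (∀ i, ile (x i) (y i)) → ile (g x) (g y)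

/-- A De Morgan function preserves a subset X of DM4 if it maps tuples from X into X. -/
def Preserves {k : ℕ} (g : DMFun k) (X : Set DM4) : Prop :=
  ∀ x : Fin (k + 1) → DM4, (∀ i, x i ∈ X) → g x ∈ X

def B2 : Set DM4 := {t, f}
def K3 : Set DM4 := {t, n, f}
def P3 : Set DM4 := {t, b, f}

/-- A unary operation as a De Morgan function. -/
def toF1 (g : DM4 → DM4) : DMFun 0 := fun x => g (x 0)

/-- A binary operation as a De Morgan function. -/
def toF2 (g : DM4 → DM4 → DM4) : DMFun 1 := fun x => g (x 0) (x 1)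

/-- A ternary operation as a De Morgan function. -/
def toF3 (g : DM4 → DM4 → DM4 → DM4) : DMFun 2 := fun x => g (x 0) (x 1) (x 2)

/-- The clone generated by a family of operations, as a family of sets. -/
def CloneOf (S : ∀ k : ℕ, Set (DMFun k)) : ∀ k : ℕ, Set (DMFun k) :=
  fun k => {g | InClone S k g}

/-- Inclusion of families of operations. -/
def CloneLE (C D : ∀ k : ℕ, Set (DMFun k)) : Prop := ∀ k : ℕ, C k ⊆ D k

instance : Fintype DM4 := ⟨{t, f, n, b}, fun x => by cases x <;> decide⟩

instance : DecidableRel ile := fun x y => inferInstanceAs (Decidable (x = y ∨ x = n ∨ y = b))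

/-! ### Clones as closed families -/

theorem isClone_cloneOf (S : ∀ k : ℕ, Set (DMFun k)) : IsClone (CloneOf S) where
  proj _ i := InClone.proj i
  comp _ _ _ _ hg hh := InClone.comp hg hh

theorem IsClone.cloneOf_le {C S : ∀ k : ℕ, Set (DMFun k)} (hC : IsClone C)
    (hS : CloneLE S C) : CloneLE (CloneOf S) C := by
  intro k g hg
  induction hg with
  | base h => exact hS _ h
  | proj i => exact hC.proj _ i
  | comp _ _ ihg ihh => exact hC.comp _ _ _ _ ihg ihh

theorem CloneLE.trans {C D E : ∀ k : ℕ, Set (DMFun k)} (h : CloneLE C D) (h' : CloneLE D E) :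
    CloneLE C E := fun k => (h k).trans (h' k)

theorem CloneLE.antisymm {C D : ∀ k : ℕ, Set (DMFun k)} (h : CloneLE C D) (h' : CloneLE D C) :
    C = D := funext fun k => (h k).antisymm (h' k)

theorem cloneOf_le_cloneOf_funion (S T : ∀ k : ℕ, Set (DMFun k)) :
    CloneLE (CloneOf S) (CloneOf (S ⊹ T)) :=
  (isClone_cloneOf _).cloneOf_le fun _ _ h => InClone.base (Or.inl h)

theorem IsClone.cloneOf_funion_le {C S T : ∀ k : ℕ, Set (DMFun k)} (hC : IsClone C)
    (hS : CloneLE (CloneOf S) C) (hT : CloneLE T C) : CloneLE (CloneOf (S ⊹ T)) C :=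
  hC.cloneOf_le fun k _ h => h.elim (fun h => hS k (InClone.base h)) (fun h => hT k h)

theorem op2_le {C : ∀ k : ℕ, Set (DMFun k)} {m : DM4 → DM4 → DM4} (h : toF2 m ∈ C 1) :
    CloneLE (op2 m) C
  | 0, _, hg => hg.elim
  | 1, _, hg => by cases hg; exact h
  | _ + 2, _, hg => hg.elim

theorem op3_le {C : ∀ k : ℕ, Set (DMFun k)} {m : DM4 → DM4 → DM4 → DM4} (h : toF3 m ∈ C 2) :
    CloneLE (op3 m) C
  | 0, _, hg => hg.elim
  | 1, _, hg => hg.elim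
  | 2, _, hg => by cases hg; exact h
  | _ + 3, _, hg => hg.elim

theorem toF2_mem_cloneOf (S : ∀ k : ℕ, Set (DMFun k)) (m : DM4 → DM4 → DM4) :
    toF2 m ∈ CloneOf (S ⊹ op2 m) 1 := InClone.base (Or.inr rfl)

theorem toF3_mem_cloneOf (S : ∀ k : ℕ, Set (DMFun k)) (m : DM4 → DM4 → DM4 → DM4) :
    toF3 m ∈ CloneOf (S ⊹ op3 m) 2 := InClone.base (Or.inr rfl)

/-! ### Clones containing the De Morgan operations -/

/-- A clone containing the De Morgan operations. -/
structure IsDMClone (C : ∀ k : ℕ, Set (DMFun k)) : Prop extends IsClone C where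
  dma_le : CloneLE (CloneOf DMAGen) C

theorem isDMClone_dma : IsDMClone (CloneOf DMAGen) := ⟨isClone_cloneOf _, fun _ _ h => h⟩

namespace IsDMClone

variable {C : ∀ k : ℕ, Set (DMFun k)} {k : ℕ} {g h : DMFun k}

theorem meet_mem (hC : IsDMClone C) (hg : g ∈ C k) (hh : h ∈ C k) :
    (fun x => meet (g x) (h x)) ∈ C k :=
  hC.comp k 1 (fun x => meet (x 0) (x 1)) ![g, h]
    (hC.dma_le 1 (InClone.base (Or.inl (Or.inl rfl))))
    (by intro i; fin_cases i <;> assumption)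

theorem join_mem (hC : IsDMClone C) (hg : g ∈ C k) (hh : h ∈ C k) :
    (fun x => join (g x) (h x)) ∈ C k :=
  hC.comp k 1 (fun x => join (x 0) (x 1)) ![g, h]
    (hC.dma_le 1 (InClone.base (Or.inl (Or.inr (Or.inl rfl)))))
    (by intro i; fin_cases i <;> assumption)

theorem neg_mem (hC : IsDMClone C) (hg : g ∈ C k) : (fun x => neg (g x)) ∈ C k :=
  hC.comp k 0 (fun x => neg (x 0)) (fun _ => g)
    (hC.dma_le 0 (InClone.base (Or.inr rfl))) (fun _ => hg)

theorem const_t_mem (hC : IsDMClone C) (k : ℕ) : (fun _ => t) ∈ C k :=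
  hC.comp k 0 (fun _ => t) (fun _ x => x 0)
    (hC.dma_le 0 (InClone.base (Or.inl (Or.inr (Or.inr (Or.inl rfl))))))
    (fun _ => hC.proj k 0)

theorem const_f_mem (hC : IsDMClone C) (k : ℕ) : (fun _ => f) ∈ C k :=
  hC.neg_mem (hC.const_t_mem k)

end IsDMClone

/-! ### Preservation of binary relations -/

/-- A De Morgan function preserves a binary relation on `DM4`. -/
def PreservesRel (R : DM4 → DM4 → Prop) {k : ℕ} (g : DMFun k) : Prop :=
  ∀ x y : Fin (k + 1) → DM4, (∀ i, R (x i) (y i)) → R (g x) (g y)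

theorem isClone_preservesRel (R : DM4 → DM4 → Prop) :
    IsClone fun _ => {g | PreservesRel R g} where
  proj _ i _ _ h := h i
  comp _ _ _ _ hg hh x y hxy := hg _ _ fun i => hh i x y hxy

theorem preservesRel_of_mem_dma {R : DM4 → DM4 → Prop} (ht : R t t) (hf : R f f)
    (hneg : ∀ x y, R x y → R (neg x) (neg y))
    (hmeet : ∀ x y x' y', R x y → R x' y' → R (meet x x') (meet y y'))
    (hjoin : ∀ x y x' y', R x y → R x' y' → R (join x x') (join y y')) :
    CloneLE (CloneOf DMAGen) fun _ => {g | PreservesRel R g} := by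
  refine (isClone_preservesRel R).cloneOf_le ?_
  rintro k g ((h | h | h | h) | h)
  · exact op2_le (C := fun _ => {g | PreservesRel R g}) (m := meet)
      (fun x y hxy => hmeet _ _ _ _ (hxy 0) (hxy 1)) k h
  · exact op2_le (C := fun _ => {g | PreservesRel R g}) (m := join)
      (fun x y hxy => hjoin _ _ _ _ (hxy 0) (hxy 1)) k h
  all_goals
    match k with
    | 0 => cases h; intro x y hxy; first | exact ht | exact hf | exact hneg _ _ (hxy 0)
    | _ + 1 => exact h.elim

theorem preservesRel_conf_of_mem_dma :
    CloneLE (CloneOf DMAGen) fun _ => {g | PreservesRel (fun x y => y = conf x) g} :=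
  preservesRel_of_mem_dma (by decide) (by decide) (by decide) (by decide) (by decide)

theorem preservesRel_ile_conf_of_mem_dma :
    CloneLE (CloneOf DMAGen) fun _ => {g | PreservesRel (fun x y => ile x (conf y)) g} :=
  preservesRel_of_mem_dma (by decide) (by decide) (by decide) (by decide) (by decide)

theorem preservesRel_conf_ile_of_mem_dma :
    CloneLE (CloneOf DMAGen) fun _ => {g | PreservesRel (fun x y => ile (conf x) y) g} :=
  preservesRel_of_mem_dma (by decide) (by decide) (by decide) (by decide) (by decide)

theorem preservesRel_ile_conf_of_mem_mnh1 :
    CloneLE (CloneOf (DMAGen ⊹ op2 mnh1))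
      fun _ => {g | PreservesRel (fun x y => ile x (conf y)) g} := by
  have key : ∀ x y x' y', ile x (conf y) → ile x' (conf y') →
      ile (mnh1 x x') (conf (mnh1 y y')) := by decide
  exact (isClone_preservesRel _).cloneOf_funion_le preservesRel_ile_conf_of_mem_dma
    (op2_le fun _ _ hxy => key _ _ _ _ (hxy 0) (hxy 1))

theorem preservesRel_conf_ile_of_mem_mnh2 :
    CloneLE (CloneOf (DMAGen ⊹ op2 mnh2))
      fun _ => {g | PreservesRel (fun x y => ile (conf x) y) g} := by
  have key : ∀ x y x' y', ile (conf x) y → ile (conf x') y' →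
      ile (conf (mnh2 x x')) (mnh2 y y') := by decide
  exact (isClone_preservesRel _).cloneOf_funion_le preservesRel_conf_ile_of_mem_dma
    (op2_le fun _ _ hxy => key _ _ _ _ (hxy 0) (hxy 1))

theorem preservesRel_conf_of_mem_mhnp3 :
    CloneLE (CloneOf (DMAGen ⊹ op3 mhnp3))
      fun _ => {g | PreservesRel (fun x y => y = conf x) g} := by
  have key : ∀ x y z, mhnp3 (conf x) (conf y) (conf z) = conf (mhnp3 x y z) := by decide
  refine (isClone_preservesRel _).cloneOf_funion_le preservesRel_conf_of_mem_dma
    (op3_le fun x y hxy => ?_)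
  simp only [toF3, hxy]
  exact key _ _ _

/-! ### De Morgan functions are exactly the harmonious persistent ones -/

section NormalForm

variable {C : ∀ k : ℕ, Set (DMFun k)} {k : ℕ}

theorem IsDMClone.exists_join {ι : Type*} (hC : IsDMClone C) (s : Finset ι)
    (F : ι → DMFun k) (hF : ∀ i, F i ∈ C k) :
    ∃ G ∈ C k, ∀ x, des (G x) = true ↔ ∃ i ∈ s, des (F i x) = true := by
  classical
  have hdes : ∀ x y, des (join x y) = true ↔ des x = true ∨ des y = true := by decide
  induction s using Finset.induction_on with
  | empty => exact ⟨_, hC.const_f_mem k, by simp [des]⟩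
  | insert a s _ ih =>
    obtain ⟨G, hG, h⟩ := ih
    exact ⟨_, hC.join_mem (hF a) hG, fun x => by simp [hdes, h]⟩

theorem IsDMClone.exists_meet {ι : Type*} (hC : IsDMClone C) (s : Finset ι)
    (F : ι → DMFun k) (hF : ∀ i, F i ∈ C k) :
    ∃ G ∈ C k, ∀ x, des (G x) = true ↔ ∀ i ∈ s, des (F i x) = true := by
  classical
  have hdes : ∀ x y, des (meet x y) = true ↔ des x = true ∧ des y = true := by decide
  induction s using Finset.induction_on with
  | empty => exact ⟨_, hC.const_t_mem k, by simp [des]⟩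
  | insert a s _ ih =>
    obtain ⟨G, hG, h⟩ := ih
    exact ⟨_, hC.meet_mem (hF a) hG, fun x => by simp [hdes, h]⟩

theorem IsDMClone.exists_literal (hC : IsDMClone C) (a : DM4) (i : Fin (k + 1)) :
    ∃ G ∈ C k, ∀ x, des (G x) = true ↔ ile a (x i) := by
  have hi := hC.proj k i
  cases a
  · have key : ∀ x, des x = true ↔ ile t x := by decide
    exact ⟨_, hi, fun x => key _⟩
  · have key : ∀ x, des (neg x) = true ↔ ile f x := by decide
    exact ⟨_, hC.neg_mem hi, fun x => key _⟩
  · have key : ∀ x, des t = true ↔ ile n x := by decide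
    exact ⟨_, hC.const_t_mem k, fun x => key (x i)⟩
  · have key : ∀ x, des (meet x (neg x)) = true ↔ ile b x := by decide
    exact ⟨_, hC.meet_mem hi (hC.neg_mem hi), fun x => key _⟩

theorem IsDMClone.exists_minterm (hC : IsDMClone C) (a : Fin (k + 1) → DM4) :
    ∃ G ∈ C k, ∀ x, des (G x) = true ↔ ∀ i, ile (a i) (x i) := by
  choose F hF hdes using fun i => hC.exists_literal (a i) i
  obtain ⟨G, hG, h⟩ := hC.exists_meet Finset.univ F hF
  exact ⟨G, hG, fun x => by simp [h, hdes]⟩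

theorem IsDMClone.exists_des_iff_of_persistent (hC : IsDMClone C) {g : DMFun k}
    (hg : Persistent g) : ∃ G ∈ C k, ∀ x, des (G x) = true ↔ des (g x) = true := by
  choose F hF hdes using hC.exists_minterm (k := k)
  obtain ⟨G, hG, h⟩ := hC.exists_join {a | des (g a) = true} F hF
  have hmono : ∀ x y, ile x y → des x = true → des y = true := by decide
  refine ⟨G, hG, fun x => (h x).trans ⟨?_, fun hx => ⟨x, by simpa using hx, ?_⟩⟩⟩
  · rintro ⟨a, ha, hax⟩
    exact hmono _ _ (hg a x ((hdes a x).1 hax)) (by simpa using ha)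
  · exact (hdes x x).2 fun _ => Or.inl rfl

theorem Harmonious.eq_of_des_iff {g h : DMFun k} (hg : Harmonious g) (hh : Harmonious h)
    (hdes : ∀ x, des (g x) = true ↔ des (h x) = true) : g = h := by
  have key : ∀ x y, (des x = true ↔ des y = true) →
      (des (conf x) = true ↔ des (conf y) = true) → x = y := by decide
  funext x
  refine key _ _ (hdes x) ?_
  rw [← hg x, ← hh x]
  exact hdes _

theorem harmonious_of_mem_dma {g : DMFun k} (hg : g ∈ CloneOf DMAGen k) : Harmonious g :=
  fun x => preservesRel_conf_of_mem_dma k hg x _ fun _ => rfl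

theorem mem_dma_of_harmonious_of_persistent {g : DMFun k} (hg : Harmonious g)
    (hp : Persistent g) : g ∈ CloneOf DMAGen k := by
  obtain ⟨G, hG, h⟩ := isDMClone_dma.exists_des_iff_of_persistent hp
  rwa [← (harmonious_of_mem_dma hG).eq_of_des_iff hg h]

end NormalForm

/-! ### Generating the minimal functions -/

namespace IsDMClone

variable {C : ∀ k : ℕ, Set (DMFun k)} {k : ℕ}

/-- Any binary function of the clone that is separated from the harmonious ones as `mnh1` is
yields `mnh1`, by a single De Morgan term. -/
theorem mnh1_mem_of_binary (hC : IsDMClone C) {h : DMFun 1} (hh : h ∈ C 1)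
    (hnb : h ![n, b] = n ∨ h ![n, b] = f) (hbn : h ![b, n] = n ∨ h ![b, n] = t) :
    toF2 mnh1 ∈ C 1 := by
  have h0 := hC.proj 1 0
  have h1 := hC.proj 1 1
  have key : ∀ x y v, (x = n → y = b → v = n ∨ v = f) → (x = b → y = n → v = n ∨ v = t) →
      mnh1 x y = meet (meet y (neg y)) (join v (join x (neg x))) := by decide
  convert hC.meet_mem (hC.meet_mem h1 (hC.neg_mem h1))
    (hC.join_mem hh (hC.join_mem h0 (hC.neg_mem h0))) using 1
  funext x
  have hx : x = ![x 0, x 1] := by ext i; fin_cases i <;> rfl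
  refine key (x 0) (x 1) (h x) ?_ ?_ <;> intro e0 e1 <;> rw [hx, e0, e1] <;> assumption

theorem mnh2_mem_of_binary (hC : IsDMClone C) {h : DMFun 1} (hh : h ∈ C 1)
    (hnb : h ![n, b] = b ∨ h ![n, b] = t) (hbn : h ![b, n] = b ∨ h ![b, n] = f) :
    toF2 mnh2 ∈ C 1 := by
  have h0 := hC.proj 1 0
  have h1 := hC.proj 1 1
  have key : ∀ x y v, (x = n → y = b → v = b ∨ v = t) → (x = b → y = n → v = b ∨ v = f) →
      mnh2 x y = meet (meet y (neg y)) (join v (join x (neg x))) := by decide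
  convert hC.meet_mem (hC.meet_mem h1 (hC.neg_mem h1))
    (hC.join_mem hh (hC.join_mem h0 (hC.neg_mem h0))) using 1
  funext x
  have hx : x = ![x 0, x 1] := by ext i; fin_cases i <;> rfl
  refine key (x 0) (x 1) (h x) ?_ ?_ <;> intro e0 e1 <;> rw [hx, e0, e1] <;> assumption

set_option synthInstance.maxSize 1000 in
set_option synthInstance.maxHeartbeats 200000 in
theorem mhnp3_mem_of_ternary (hC : IsDMClone C) {h : DMFun 2} (hh : h ∈ C 2)
    (hharm : Harmonious h) (hnnb : h ![n, n, b] = b ∨ h ![n, n, b] = f)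
    (htnb : h ![t, n, b] = n ∨ h ![t, n, b] = t) : toF3 mhnp3 ∈ C 2 := by
  have h0 := hC.proj 2 0
  have h1 := hC.proj 2 1
  have h2 := hC.proj 2 2
  have hconf (x y z : DM4) : h ![conf x, conf y, conf z] = conf (h ![x, y, z]) := by
    rw [← hharm]
    congr 1
    ext i
    fin_cases i <;> rfl
  have hbbn : h ![b, b, n] = n ∨ h ![b, b, n] = f := by
    have := hconf n n b
    rcases hnnb with e | e <;> rw [e] at this <;> simp_all [conf]
  have htbn : h ![t, b, n] = b ∨ h ![t, b, n] = t := by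
    have := hconf t n b
    rcases htnb with e | e <;> rw [e] at this <;> simp_all [conf]
  have key : ∀ x y z v, (x = n → y = n → z = b → v = b ∨ v = f) →
      (x = t → y = n → z = b → v = n ∨ v = t) →
      (x = b → y = b → z = n → v = n ∨ v = f) →
      (x = t → y = b → z = n → v = b ∨ v = t) →
      mhnp3 x y z = meet (meet y (neg y)) (meet x (join v (join z (neg z)))) := by decide
  convert hC.meet_mem (hC.meet_mem h1 (hC.neg_mem h1))
    (hC.meet_mem h0 (hC.join_mem hh (hC.join_mem h2 (hC.neg_mem h2)))) using 1
  funext x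
  have hx : x = ![x 0, x 1, x 2] := by ext i; fin_cases i <;> rfl
  refine key (x 0) (x 1) (x 2) (h x) ?_ ?_ ?_ ?_ <;> intro e0 e1 e2 <;>
    rw [hx, e0, e1, e2] <;> assumption

theorem exists_conf_pair (hC : IsDMClone C) (a : DM4) :
    ∃ T ∈ C 1, T ![n, b] = a ∧ T ![b, n] = conf a := by
  cases a
  · exact ⟨_, hC.const_t_mem 1, rfl, rfl⟩
  · exact ⟨_, hC.const_f_mem 1, rfl, rfl⟩
  · exact ⟨_, hC.proj 1 0, rfl, rfl⟩
  · exact ⟨_, hC.proj 1 1, rfl, rfl⟩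

theorem exists_ile_pair (hC : IsDMClone C) {a c : DM4} (hac : ile a c) :
    ∃ T ∈ C 2, T ![n, n, b] = a ∧ T ![t, n, b] = c := by
  have h0 := hC.proj 2 0
  have h1 := hC.proj 2 1
  have h2 := hC.proj 2 2
  have hf := hC.meet_mem h0 h2
  have ht := hC.neg_mem hf
  match a, c, hac with
  | t, t, _ => exact ⟨_, hC.const_t_mem 2, rfl, rfl⟩
  | f, f, _ => exact ⟨_, hC.const_f_mem 2, rfl, rfl⟩
  | n, n, _ => exact ⟨_, h1, rfl, rfl⟩
  | b, b, _ => exact ⟨_, h2, rfl, rfl⟩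
  | n, t, _ => exact ⟨_, h0, rfl, rfl⟩
  | n, f, _ => exact ⟨_, hC.neg_mem h0, rfl, rfl⟩
  | n, b, _ => exact ⟨_, hC.meet_mem h0 ht, rfl, rfl⟩
  | t, b, _ => exact ⟨_, ht, rfl, rfl⟩
  | f, b, _ => exact ⟨_, hf, rfl, rfl⟩

theorem mnh_mem_of_not_harmonious (hC : IsDMClone C) {g : DMFun k} (hg : g ∈ C k)
    (hh : ¬ Harmonious g) : toF2 mnh1 ∈ C 1 ∨ toF2 mnh2 ∈ C 1 := by
  simp only [Harmonious, not_forall] at hh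
  obtain ⟨a, ha⟩ := hh
  choose T hT hnb hbn using fun i => hC.exists_conf_pair (a i)
  have hmem := hC.comp 1 k g T hg hT
  have key : ∀ u v, v ≠ conf u →
      ((u = n ∨ u = f) ∧ (v = n ∨ v = t)) ∨ ((u = b ∨ u = t) ∧ (v = b ∨ v = f)) ∨
      ((neg u = n ∨ neg u = f) ∧ (neg v = n ∨ neg v = t)) ∨
      ((neg u = b ∨ neg u = t) ∧ (neg v = b ∨ neg v = f)) := by decide
  have := key (g fun i => T i ![n, b]) (g fun i => T i ![b, n]) (by simpa only [hnb, hbn] using ha)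
  rcases this with ⟨h, h'⟩ | ⟨h, h'⟩ | ⟨h, h'⟩ | ⟨h, h'⟩
  · exact Or.inl (hC.mnh1_mem_of_binary hmem h h')
  · exact Or.inr (hC.mnh2_mem_of_binary hmem h h')
  · exact Or.inl (hC.mnh1_mem_of_binary (hC.neg_mem hmem) h h')
  · exact Or.inr (hC.mnh2_mem_of_binary (hC.neg_mem hmem) h h')

theorem mhnp3_mem_of_not_persistent (hC : IsDMClone C)
    (hharm : ∀ g ∈ C 2, Harmonious g) {g : DMFun k} (hg : g ∈ C k)
    (hgh : Harmonious g) (hp : ¬ Persistent g) : toF3 mhnp3 ∈ C 2 := by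
  simp only [Persistent, not_forall] at hp
  obtain ⟨a, c, hac, hgac⟩ := hp
  have hconf : ∀ x y, ile x y → ile (conf y) (conf x) := by decide
  choose T hT hnnb htnb using fun i => hC.exists_ile_pair (hconf _ _ (hac i))
  have hmem := hC.comp 2 k g T hg hT
  have key : ∀ u v, ¬ ile u v →
      ((conf v = b ∨ conf v = f) ∧ (conf u = n ∨ conf u = t)) ∨
      ((neg (conf v) = b ∨ neg (conf v) = f) ∧
        (neg (conf u) = n ∨ neg (conf u) = t)) := by decide
  have := key _ _ hgac
  rw [← hgh a, ← hgh c] at this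
  simp only [← hnnb, ← htnb] at this
  rcases this with ⟨h, h'⟩ | ⟨h, h'⟩
  · exact hC.mhnp3_mem_of_ternary hmem (hharm _ hmem) h h'
  · exact hC.mhnp3_mem_of_ternary (hC.neg_mem hmem) (hharm _ (hC.neg_mem hmem)) h h'

theorem minimal_function_mem (hC : IsDMClone C) (hne : C ≠ CloneOf DMAGen) :
    toF2 mnh1 ∈ C 1 ∨ toF2 mnh2 ∈ C 1 ∨ toF3 mhnp3 ∈ C 2 := by
  by_cases hharm : ∀ k, ∀ g ∈ C k, Harmonious g
  · refine Or.inr (Or.inr ?_)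
    by_contra hno
    refine hne (CloneLE.antisymm (fun k g hg => ?_) hC.dma_le)
    refine mem_dma_of_harmonious_of_persistent (hharm k g hg) ?_
    by_contra hp
    exact hno (hC.mhnp3_mem_of_not_persistent (hharm 2) hg (hharm k g hg) hp)
  · simp only [not_forall] at hharm
    obtain ⟨k, g, hg, hh⟩ := hharm
    exact (hC.mnh_mem_of_not_harmonious hg hh).imp_right Or.inl

end IsDMClone

/-! ### Incomparability -/

theorem mnh1_notMem_mnh2 : toF2 mnh1 ∉ CloneOf (DMAGen ⊹ op2 mnh2) 1 := fun h =>
  absurd (preservesRel_conf_ile_of_mem_mnh2 1 h ![n, b] ![b, n] (by decide)) (by decide)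

theorem mnh2_notMem_mnh1 : toF2 mnh2 ∉ CloneOf (DMAGen ⊹ op2 mnh1) 1 := fun h =>
  absurd (preservesRel_ile_conf_of_mem_mnh1 1 h ![n, b] ![b, n] (by decide)) (by decide)

theorem mnh1_notMem_mhnp3 : toF2 mnh1 ∉ CloneOf (DMAGen ⊹ op3 mhnp3) 1 := fun h =>
  absurd (preservesRel_conf_of_mem_mhnp3 1 h ![n, b] ![b, n] (by decide)) (by decide)

theorem mnh2_notMem_mhnp3 : toF2 mnh2 ∉ CloneOf (DMAGen ⊹ op3 mhnp3) 1 := fun h =>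
  absurd (preservesRel_conf_of_mem_mhnp3 1 h ![n, b] ![b, n] (by decide)) (by decide)

theorem mhnp3_notMem_mnh1 : toF3 mhnp3 ∉ CloneOf (DMAGen ⊹ op2 mnh1) 2 := fun h =>
  absurd (preservesRel_ile_conf_of_mem_mnh1 2 h ![t, b, n] ![n, n, b] (by decide)) (by decide)

theorem mhnp3_notMem_mnh2 : toF3 mhnp3 ∉ CloneOf (DMAGen ⊹ op2 mnh2) 2 := fun h =>
  absurd (preservesRel_conf_ile_of_mem_mnh2 2 h ![b, b, n] ![t, n, b] (by decide)) (by decide)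

/-- If the clones `D i` properly contain DMA, form an antichain, and every clone properly above DMA
contains one of them, then they are exactly the covers of DMA. -/
theorem cover_iff_of_antichain {ι : Type*} (D : ι → ∀ k : ℕ, Set (DMFun k))
    (hD : ∀ i, IsDMClone (D i)) (hne : ∀ i, D i ≠ CloneOf DMAGen)
    (hmin : ∀ C, IsDMClone C → C ≠ CloneOf DMAGen → ∃ i, CloneLE (D i) C)
    (hanti : ∀ i j, CloneLE (D i) (D j) → i = j) (C : ∀ k : ℕ, Set (DMFun k)) :
    (IsClone C ∧ CloneLE (CloneOf DMAGen) C ∧ C ≠ CloneOf DMAGen ∧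
      (∀ E : ∀ k : ℕ, Set (DMFun k), IsClone E → CloneLE (CloneOf DMAGen) E →
        CloneLE E C → (E = CloneOf DMAGen ∨ E = C))) ↔ ∃ i, C = D i := by
  constructor
  · rintro ⟨hC, hle, hCne, hcov⟩
    obtain ⟨i, hi⟩ := hmin C ⟨hC, hle⟩ hCne
    exact ⟨i, ((hcov _ (hD i).toIsClone (hD i).dma_le hi).resolve_left (hne i)).symm⟩
  · rintro ⟨i, rfl⟩
    refine ⟨(hD i).toIsClone, (hD i).dma_le, hne i, fun E hE hle hEi => ?_⟩
    refine or_iff_not_imp_left.2 fun hEne => hEi.antisymm ?_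
    obtain ⟨j, hj⟩ := hmin E ⟨hE, hle⟩ hEne
    exact hanti j i (hj.trans hEi) ▸ hj

/-- Every clone strictly above DMA contains mnh²₁, mnh²₂ or mhnp³;
the three clones ⟨DMA, mnh²₁⟩, ⟨DMA, mnh²₂⟩, ⟨DMA, mhnp³⟩ are pairwise incomparable;
consequently these are exactly the covers of DMA in the lattice of clones on DM4. -/
theorem covers_of_dma :
    (∀ C : ∀ k : ℕ, Set (DMFun k), IsClone C → CloneLE (CloneOf DMAGen) C →
      C ≠ CloneOf DMAGen →
      (toF2 mnh1 ∈ C 1 ∨ toF2 mnh2 ∈ C 1 ∨ toF3 mhnp3 ∈ C 2)) ∧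
    (¬ CloneLE (CloneOf (DMAGen ⊹ op2 mnh1)) (CloneOf (DMAGen ⊹ op2 mnh2)) ∧
     ¬ CloneLE (CloneOf (DMAGen ⊹ op2 mnh2)) (CloneOf (DMAGen ⊹ op2 mnh1)) ∧
     ¬ CloneLE (CloneOf (DMAGen ⊹ op2 mnh1)) (CloneOf (DMAGen ⊹ op3 mhnp3)) ∧
     ¬ CloneLE (CloneOf (DMAGen ⊹ op3 mhnp3)) (CloneOf (DMAGen ⊹ op2 mnh1)) ∧
     ¬ CloneLE (CloneOf (DMAGen ⊹ op2 mnh2)) (CloneOf (DMAGen ⊹ op3 mhnp3)) ∧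
     ¬ CloneLE (CloneOf (DMAGen ⊹ op3 mhnp3)) (CloneOf (DMAGen ⊹ op2 mnh2))) ∧
    (∀ C : ∀ k : ℕ, Set (DMFun k),
      (IsClone C ∧ CloneLE (CloneOf DMAGen) C ∧ C ≠ CloneOf DMAGen ∧
        (∀ E : ∀ k : ℕ, Set (DMFun k), IsClone E → CloneLE (CloneOf DMAGen) E →
          CloneLE E C → (E = CloneOf DMAGen ∨ E = C))) ↔
      (C = CloneOf (DMAGen ⊹ op2 mnh1) ∨ C = CloneOf (DMAGen ⊹ op2 mnh2) ∨
        C = CloneOf (DMAGen ⊹ op3 mhnp3))) := by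
  have not_le : ∀ {C D : ∀ k : ℕ, Set (DMFun k)} {k : ℕ} {g : DMFun k}, g ∈ C k → g ∉ D k →
      ¬ CloneLE C D := fun hg hg' h => hg' (h _ hg)
  have h12 := not_le (toF2_mem_cloneOf DMAGen mnh1) mnh1_notMem_mnh2
  have h21 := not_le (toF2_mem_cloneOf DMAGen mnh2) mnh2_notMem_mnh1
  have h13 := not_le (toF2_mem_cloneOf DMAGen mnh1) mnh1_notMem_mhnp3
  have h31 := not_le (toF3_mem_cloneOf DMAGen mhnp3) mhnp3_notMem_mnh1
  have h23 := not_le (toF2_mem_cloneOf DMAGen mnh2) mnh2_notMem_mhnp3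
  have h32 := not_le (toF3_mem_cloneOf DMAGen mhnp3) mhnp3_notMem_mnh2
  refine ⟨fun C hC hle hne => IsDMClone.minimal_function_mem ⟨hC, hle⟩ hne,
    ⟨h12, h21, h13, h31, h23, h32⟩, fun C => ?_⟩
  have hDM (S : ∀ k : ℕ, Set (DMFun k)) : IsDMClone (CloneOf (DMAGen ⊹ S)) :=
    ⟨isClone_cloneOf _, cloneOf_le_cloneOf_funion _ _⟩
  have hanti : ∀ i j, CloneLE (CloneOf (DMAGen ⊹ ![op2 mnh1, op2 mnh2, op3 mhnp3] i))
      (CloneOf (DMAGen ⊹ ![op2 mnh1, op2 mnh2, op3 mhnp3] j)) → i = j := by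
    intro i j h
    fin_cases i <;> fin_cases j <;>
      first | rfl | exact absurd h (by assumption)
  refine (cover_iff_of_antichain
    (fun i => CloneOf (DMAGen ⊹ ![op2 mnh1, op2 mnh2, op3 mhnp3] i)) (fun i => hDM _)
    (fun i he => ?_) (fun E hE hne => ?_) hanti C).trans ?_
  · have hall (j : Fin 3) : i = j := hanti i j (he ▸ (hDM _).dma_le)
    exact absurd ((hall 0).symm.trans (hall 1)) (by decide)
  · rcases hE.minimal_function_mem hne with h | h | h
    · exact ⟨0, hE.cloneOf_funion_le hE.dma_le (op2_le h)⟩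
    · exact ⟨1, hE.cloneOf_funion_le hE.dma_le (op2_le h)⟩
    · exact ⟨2, hE.cloneOf_funion_le hE.dma_le (op3_le h)⟩
  · simp [Fin.exists_fin_succ]

end DM4
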